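/- Let (λ, u) be an eigenpair of the rate constant matrix K with ‖u‖_π = 1 and λ < 0, and let D = K_{TT} − K_{TS}K_{SS}⁻¹K_{ST}. For V of either Type A or B, ‖Vu‖_π ≤ ρ(D)/|λ|, where ρ(D) is the spectral radius of D. -/

import Mathlib

open Matrix BigOperators

/-- Assemble an `n × n` matrix from four blocks indexed by a set `S` and its complement. -/
def rcmcAssemble {n : ℕ} (S : Finset (Fin n))
    (ASS : Matrix ↥S ↥S ℝ) (AST : Matrix ↥S ↥(Sᶜ) ℝ)
    (ATS : Matrix ↥(Sᶜ) ↥S ℝ) (ATT : Matrix ↥(Sᶜ) ↥(Sᶜ) ℝ) :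
    Matrix (Fin n) (Fin n) ℝ := fun i j =>
  if hi : i ∈ S then
    if hj : j ∈ S then ASS ⟨i, hi⟩ ⟨j, hj⟩
    else AST ⟨i, hi⟩ ⟨j, Finset.mem_compl.mpr hj⟩
  else
    if hj : j ∈ S then ATS ⟨i, Finset.mem_compl.mpr hi⟩ ⟨j, hj⟩
    else ATT ⟨i, Finset.mem_compl.mpr hi⟩ ⟨j, Finset.mem_compl.mpr hj⟩

/-- The `π`-norm on `ℝⁿ`: `‖a‖_π = √(∑ i, a i² / π i)`. -/
noncomputable def pinorm {m : Type*} [Fintype m] (π : m → ℝ) (a : m → ℝ) : ℝ :=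
  Real.sqrt (∑ i, a i ^ 2 / π i)


section
variable {σ τ : Type*} [Fintype σ] [DecidableEq σ] [Fintype τ] [DecidableEq τ]

/-- Laplacian-type identity. -/
lemma rc_energy (W : σ → σ → ℝ) (hW : ∀ i j, W i j = W j i)
    (hoff : ∀ i j, i ≠ j → 0 ≤ W i j) (z : σ → ℝ) :
    ∑ i, ∑ j, W i j * z i * z j ≤ ∑ j, (∑ i, W i j) * z j ^ 2 := by
  have h0 : 0 ≤ ∑ i, ∑ j, W i j * (z i - z j) ^ 2 := by
    refine Finset.sum_nonneg fun i _ => Finset.sum_nonneg fun j _ => ?_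
    by_cases h : i = j
    · subst h; simp
    · exact mul_nonneg (hoff i j h) (sq_nonneg _)
  have h1 : ∑ j, (∑ i, W i j) * z j ^ 2 = ∑ i, ∑ j, W i j * z j ^ 2 := by
    simp_rw [Finset.sum_mul]; exact Finset.sum_comm
  have h2 : ∑ j, (∑ i, W i j) * z j ^ 2 = ∑ i, ∑ j, W i j * z i ^ 2 := by
    simp_rw [Finset.sum_mul]
    exact Finset.sum_congr rfl fun i _ => Finset.sum_congr rfl fun j _ => by rw [hW]
  have h3 : ∑ i, ∑ j, W i j * (z i - z j) ^ 2 =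
      ∑ i, ∑ j, W i j * z i ^ 2 + ∑ i, ∑ j, W i j * z j ^ 2
        - 2 * ∑ i, ∑ j, W i j * z i * z j := by
    simp_rw [Finset.mul_sum, ← Finset.sum_add_distrib, ← Finset.sum_sub_distrib]
    exact Finset.sum_congr rfl fun i _ => Finset.sum_congr rfl fun j _ => by ring
  linarith

lemma rc_max (A : Matrix σ σ ℝ) (p : σ → ℝ) (hp : ∀ i, 0 < p i)
    (hdb : ∀ i j, A i j * p j = p i * A j i)
    (hoff : ∀ i j, i ≠ j → 0 ≤ A i j) (hcol : ∀ j, ∑ i, A i j ≤ 0)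
    (hinv : IsUnit A.det) (x : σ → ℝ) (hx : ∀ i, 0 ≤ (A *ᵥ x) i) : ∀ i, x i ≤ 0 := by
  have key : ∀ v : σ → ℝ, ∑ i, ∑ j, A i j / p i * v i * v j ≤ 0 := by
    intro v
    have h := rc_energy (fun i j => A i j * p j) (fun i j => by rw [hdb]; ring)
      (fun i j h => mul_nonneg (hoff i j h) (hp j).le) (fun i => v i / p i)
    have e1 : ∑ i, ∑ j, A i j / p i * v i * v j
        = ∑ i, ∑ j, A i j * p j * (v i / p i) * (v j / p j) := by
      refine Finset.sum_congr rfl fun i _ => Finset.sum_congr rfl fun j _ => ?_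
      have := (hp i).ne'; have := (hp j).ne'
      field_simp
    rw [e1]
    refine h.trans (Finset.sum_nonpos fun j _ => ?_)
    rw [← Finset.sum_mul]
    exact mul_nonpos_of_nonpos_of_nonneg
      (mul_nonpos_of_nonpos_of_nonneg (hcol j) (hp j).le) (sq_nonneg _)
  let H : Matrix σ σ ℝ := fun i j => - (A i j / p i)
  have hq : ∀ v, v ⬝ᵥ (H *ᵥ v) = - ∑ i, ∑ j, A i j / p i * v i * v j := by
    intro v
    simp only [dotProduct, mulVec, H, Finset.mul_sum, ← Finset.sum_neg_distrib]
    exact Finset.sum_congr rfl fun i _ => Finset.sum_congr rfl fun j _ => by ring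
  have hH : H.PosSemidef := by
    refine Matrix.PosSemidef.of_dotProduct_mulVec_nonneg ?_ ?_
    · ext i j
      rw [conjTranspose_apply, star_trivial]
      simp only [H]
      have := hdb i j
      have := (hp i).ne'; have := (hp j).ne'
      field_simp
      linarith
    · intro v
      simp only [star_trivial]
      rw [hq]; linarith [key v]
  let v : σ → ℝ := fun i => max (x i) 0
  have hv0 : ∀ i, 0 ≤ v i := fun i => le_max_right _ _
  have hvx : 0 ≤ ∑ i, ∑ j, A i j / p i * v i * v j := by
    have h1 : 0 ≤ ∑ i, v i / p i * (A *ᵥ x) i :=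
      Finset.sum_nonneg fun i _ => mul_nonneg (div_nonneg (hv0 i) (hp i).le) (hx i)
    refine h1.trans ?_
    refine Finset.sum_le_sum fun i _ => ?_
    simp only [mulVec, dotProduct, Finset.mul_sum]
    refine Finset.sum_le_sum fun j _ => ?_
    have : v i / p i * (A i j * x j) = A i j / p i * v i * v j - A i j * v i * (v j - x j) / p i := by
      ring
    rw [this]
    have hh : 0 ≤ A i j * v i * (v j - x j) / p i := by
      refine div_nonneg ?_ (hp i).le
      by_cases h : i = j
      · subst h
        rcases le_total (x i) 0 with h | h
        · simp [v, h]
        · simp [v, h]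
      · exact mul_nonneg (mul_nonneg (hoff i j h) (hv0 i)) (sub_nonneg.2 (le_max_left _ _))
    linarith
  have hz : H *ᵥ v = 0 := by
    rw [← hH.dotProduct_mulVec_zero_iff, star_trivial, hq]
    linarith [key v]
  have hA : A *ᵥ v = 0 := by
    ext i
    have h := congrFun hz i
    simp only [mulVec, dotProduct, H, Pi.zero_apply] at h ⊢
    have : ∑ j, A i j * v j = - p i * ∑ j, -(A i j / p i) * v j := by
      rw [Finset.mul_sum]
      refine Finset.sum_congr rfl fun j _ => ?_
      have := (hp i).ne'
      field_simp
    rw [this, h, mul_zero]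
  have hv : v = 0 := Matrix.eq_zero_of_mulVec_eq_zero hinv.ne_zero hA
  intro i
  have := congrFun hv i
  simp only [v, Pi.zero_apply] at this
  exact max_eq_right_iff.1 this

lemma rc_inv (A : Matrix σ σ ℝ) (p : σ → ℝ) (hp : ∀ i, 0 < p i)
    (hdb : ∀ i j, A i j * p j = p i * A j i)
    (hoff : ∀ i j, i ≠ j → 0 ≤ A i j) (hcol : ∀ j, ∑ i, A i j ≤ 0)
    (hinv : IsUnit A.det) (i j : σ) : A⁻¹ i j ≤ 0 := by
  refine rc_max A p hp hdb hoff hcol hinv (fun i => A⁻¹ i j) (fun k => ?_) i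
  have : (A *ᵥ fun i => A⁻¹ i j) k = (A * A⁻¹) k j := rfl
  rw [this, Matrix.mul_nonsing_inv _ hinv, Matrix.one_apply]
  split_ifs <;> norm_num

lemma rc_herm (H : Matrix τ τ ℝ) (hH : H.IsHermitian) (r : ℝ)
    (hr : ∀ μ ∈ spectrum ℝ H, |μ| ≤ r) (y : τ → ℝ) :
    ∑ i, (H *ᵥ y) i ^ 2 ≤ r ^ 2 * ∑ i, y i ^ 2 := by
  have hn : ∀ z : τ → ℝ, ∑ i, z i ^ 2 = ∑ k, (hH.eigenvectorBasis k ⬝ᵥ z) ^ 2 := by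
    intro z
    have := hH.eigenvectorBasis.sum_sq_norm_inner_right (WithLp.toLp 2 z)
    rw [EuclideanSpace.norm_sq_eq] at this
    simp only [Real.norm_eq_abs, sq_abs] at this
    rw [← this]
    refine Finset.sum_congr rfl fun k _ => ?_
    simp [EuclideanSpace.inner_eq_star_dotProduct, dotProduct_comm]
  rw [hn, hn y, Finset.mul_sum]
  refine Finset.sum_le_sum fun k _ => ?_
  have : hH.eigenvectorBasis k ⬝ᵥ (H *ᵥ y) = hH.eigenvalues k * (hH.eigenvectorBasis k ⬝ᵥ y) := by
    have h1 := hH.mulVec_eigenvectorBasis k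
    have h2 : Hᵀ = H := by simpa [IsHermitian, conjTranspose_eq_transpose_of_trivial] using hH
    rw [Matrix.dotProduct_mulVec, ← Matrix.mulVec_transpose, h2, h1, smul_dotProduct, smul_eq_mul]
  rw [this, mul_pow]
  refine mul_le_mul_of_nonneg_right ?_ (sq_nonneg _)
  rw [← sq_abs (hH.eigenvalues k)]
  exact pow_le_pow_left₀ (abs_nonneg _) (hr _ (hH.eigenvalues_mem_spectrum_real k)) 2

lemma rc_spec (D : Matrix τ τ ℝ) (q : τ → ℝ) (hq : ∀ i, 0 < q i)
    (hdb : ∀ i j, D i j * q j = q i * D j i) (y : τ → ℝ) :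
    ∑ i, (D *ᵥ y) i ^ 2 / q i ≤
      (sSup {r : ℝ | ∃ μ ∈ spectrum ℝ D, r = |μ|}) ^ 2 * ∑ i, y i ^ 2 / q i := by
  set r := sSup {r : ℝ | ∃ μ ∈ spectrum ℝ D, r = |μ|} with hrdef
  let s : τ → ℝ := fun i => Real.sqrt (q i)
  have hs : ∀ i, 0 < s i := fun i => Real.sqrt_pos.2 (hq i)
  have hss : ∀ i, q i = s i ^ 2 := fun i => (Real.sq_sqrt (hq i).le).symm
  have hr : ∀ μ ∈ spectrum ℝ D, |μ| ≤ r := by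
    intro μ hμ
    refine le_csSup ?_ ⟨μ, hμ, rfl⟩
    have hf : (spectrum ℝ D).Finite := D.finite_real_spectrum
    have : {r : ℝ | ∃ μ ∈ spectrum ℝ D, r = |μ|} = (fun μ => |μ|) '' spectrum ℝ D := by
      ext t; simp [eq_comm]
    rw [this]; exact (hf.image _).bddAbove
  let U : (Matrix τ τ ℝ)ˣ :=
    ⟨diagonal s, diagonal fun i => (s i)⁻¹, by
      rw [diagonal_mul_diagonal, ← diagonal_one]; congr 1; ext i; exact mul_inv_cancel₀ (hs i).ne', by
      rw [diagonal_mul_diagonal, ← diagonal_one]; congr 1; ext i; exact inv_mul_cancel₀ (hs i).ne'⟩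
  let H : Matrix τ τ ℝ := (diagonal fun i => (s i)⁻¹) * D * diagonal s
  have hHs : spectrum ℝ H = spectrum ℝ D := spectrum.units_conjugate' (u := U)
  have hHe : ∀ i j, H i j = (s i)⁻¹ * D i j * s j := fun i j => by
    simp [H, Matrix.mul_diagonal, Matrix.diagonal_mul]
  have hH : H.IsHermitian := by
    ext i j
    rw [conjTranspose_apply, star_trivial, hHe, hHe]
    have h := hdb i j
    rw [hss, hss] at h
    have := (hs i).ne'; have := (hs j).ne'
    field_simp
    linarith
  have := rc_herm H hH r (by rwa [hHs]) (fun i => y i / s i)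
  convert this using 1
  · refine Finset.sum_congr rfl fun i _ => ?_
    have e : (H *ᵥ fun i => y i / s i) i = (D *ᵥ y) i / s i := by
      simp only [mulVec, dotProduct, hHe, Finset.sum_div]
      refine Finset.sum_congr rfl fun j _ => ?_
      have := (hs i).ne'; have := (hs j).ne'
      field_simp
    rw [e, hss, div_pow]
  · congr 1
    refine Finset.sum_congr rfl fun i _ => ?_
    rw [hss, div_pow]

lemma rc_adj {X : Matrix σ τ ℝ} {Y : Matrix τ σ ℝ} {p : σ → ℝ} {q : τ → ℝ}
    (hp : ∀ i, 0 < p i) (hq : ∀ i, 0 < q i)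
    (h : X * diagonal q = diagonal p * Yᵀ) (y : τ → ℝ) (z : σ → ℝ) :
    ∑ i, (X *ᵥ y) i * z i / p i = ∑ j, y j * (Y *ᵥ z) j / q j := by
  have h' : ∀ i j, X i j * q j = p i * Y j i := fun i j => by
    have := congrFun (congrFun h i) j
    simpa [Matrix.mul_diagonal, Matrix.diagonal_mul] using this
  simp only [mulVec, dotProduct, Finset.mul_sum, Finset.sum_mul, Finset.sum_div]
  rw [Finset.sum_comm]
  refine Finset.sum_congr rfl fun j _ => Finset.sum_congr rfl fun i _ => ?_
  have h1 := (hp i).ne'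
  have h2 := (hq j).ne'
  field_simp
  linear_combination (y j * z i) * h' i j

lemma rc_adj_mul {υ : Type*} [Fintype υ] [DecidableEq υ]
    {X : Matrix σ τ ℝ} {Y : Matrix τ σ ℝ} {X' : Matrix τ υ ℝ} {Y' : Matrix υ τ ℝ}
    {p : σ → ℝ} {q : τ → ℝ} {r : υ → ℝ}
    (h : X * diagonal q = diagonal p * Yᵀ) (h' : X' * diagonal r = diagonal q * Y'ᵀ) :
    (X * X') * diagonal r = diagonal p * (Y' * Y)ᵀ := by
  rw [Matrix.mul_assoc, h', ← Matrix.mul_assoc, h, Matrix.transpose_mul, Matrix.mul_assoc]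

lemma rc_adj_inv {A : Matrix σ σ ℝ} {p : σ → ℝ} (hinv : IsUnit A.det)
    (h : A * diagonal p = diagonal p * Aᵀ) :
    A⁻¹ * diagonal p = diagonal p * (A⁻¹)ᵀ := by
  have h1 : A⁻¹ * (A * diagonal p) * (A⁻¹)ᵀ = A⁻¹ * (diagonal p * Aᵀ) * (A⁻¹)ᵀ := by rw [h]
  rw [← Matrix.mul_assoc, Matrix.nonsing_inv_mul _ hinv, Matrix.one_mul, Matrix.mul_assoc,
    Matrix.mul_assoc, ← Matrix.transpose_mul, Matrix.nonsing_inv_mul _ hinv, Matrix.transpose_one,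
    Matrix.mul_one] at h1
  exact h1.symm

lemma rc_core (A : Matrix σ σ ℝ) (B : Matrix σ τ ℝ) (C : Matrix τ σ ℝ) (G : Matrix τ τ ℝ)
    (p : σ → ℝ) (q : τ → ℝ) (hp : ∀ i, 0 < p i) (hq : ∀ i, 0 < q i)
    (hA : A * diagonal p = diagonal p * Aᵀ)
    (hB : B * diagonal q = diagonal p * Cᵀ)
    (hC : C * diagonal p = diagonal q * Bᵀ)
    (hG : G * diagonal q = diagonal q * Gᵀ)
    (hoff : ∀ i j, i ≠ j → 0 ≤ A i j) (hB0 : ∀ i j, 0 ≤ B i j) (hC0 : ∀ i j, 0 ≤ C i j)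
    (hcol : ∀ j, ∑ i, A i j ≤ 0) (hinv : IsUnit A.det)
    (M VTT : Matrix τ τ ℝ) (hM : M = 1 + C * A⁻¹ * A⁻¹ * B)
    (hV : VTT = (diagonal (fun j => ∑ i, M i j))⁻¹ ∨ VTT = M⁻¹)
    (lam : ℝ) (hlam : lam < 0) (us : σ → ℝ) (ut : τ → ℝ)
    (e1 : A *ᵥ us + B *ᵥ ut = lam • us) (e2 : C *ᵥ us + G *ᵥ ut = lam • ut)
    (hu : ∑ i, us i ^ 2 / p i + ∑ j, ut j ^ 2 / q j = 1)
    (x y : τ → ℝ) (hx : x = ut - (C * A⁻¹) *ᵥ us) (hy : y = VTT *ᵥ x) :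
    ∑ i, ((A⁻¹ * B) *ᵥ y) i ^ 2 / p i + ∑ j, y j ^ 2 / q j ≤
      (sSup {r : ℝ | ∃ μ ∈ spectrum ℝ (G - C * A⁻¹ * B), r = |μ|} / |lam|) ^ 2 := by
  have hAi := rc_adj_inv hinv hA
  have hR' : (A⁻¹ * B) * diagonal q = diagonal p * (C * A⁻¹)ᵀ := rc_adj_mul hAi hB
  have hR : (C * A⁻¹) * diagonal p = diagonal q * (A⁻¹ * B)ᵀ := rc_adj_mul hC hAi
  have hRR : (C * A⁻¹ * (A⁻¹ * B)) * diagonal q = diagonal q * (C * A⁻¹ * (A⁻¹ * B))ᵀ :=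
    rc_adj_mul hR hR'
  have hM' : M = 1 + C * A⁻¹ * (A⁻¹ * B) := by rw [hM]; simp only [Matrix.mul_assoc]
  have hMy : ∀ j, (M *ᵥ y) j = y j + ((C * A⁻¹) *ᵥ ((A⁻¹ * B) *ᵥ y)) j := by
    intro j
    rw [hM', Matrix.add_mulVec, Matrix.one_mulVec, Matrix.mulVec_mulVec]; rfl
  -- norm of `Ω* y`
  set w := (A⁻¹ * B) *ᵥ y with hw
  have n1 : ∑ i, w i ^ 2 / p i = ∑ j, y j * ((C * A⁻¹) *ᵥ w) j / q j := by
    rw [← rc_adj hp hq hR' y w]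
    exact Finset.sum_congr rfl fun i _ => by rw [sq]
  have hN : ∑ i, w i ^ 2 / p i + ∑ j, y j ^ 2 / q j = ∑ j, y j * (M *ᵥ y) j / q j := by
    rw [n1, ← Finset.sum_add_distrib]
    exact Finset.sum_congr rfl fun j _ => by rw [hMy]; ring
  have hw0 : 0 ≤ ∑ i, w i ^ 2 / p i :=
    Finset.sum_nonneg fun i _ => div_nonneg (sq_nonneg _) (hp i).le
  -- step 2
  have h2 : ∑ j, y j * (M *ᵥ y) j / q j ≤ ∑ j, x j ^ 2 / q j := by
    rcases hV with hV | hV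
    · have hA' : ∀ i j, A i j * p j = p i * A j i := fun i j => by
        have := congrFun (congrFun hA i) j
        simpa [Matrix.mul_diagonal, Matrix.diagonal_mul] using this
      have hneg := rc_inv A p hp hA' hoff hcol hinv
      have hF : ∀ i j, 0 ≤ (C * A⁻¹ * (A⁻¹ * B)) i j := by
        intro i j
        rw [Matrix.mul_apply]
        refine Finset.sum_nonneg fun k _ => mul_nonneg_of_nonpos_of_nonpos ?_ ?_
        · rw [Matrix.mul_apply]
          exact Finset.sum_nonpos fun l _ => mul_nonpos_of_nonneg_of_nonpos (hC0 _ _) (hneg _ _)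
        · rw [Matrix.mul_apply]
          exact Finset.sum_nonpos fun l _ => mul_nonpos_of_nonpos_of_nonneg (hneg _ _) (hB0 _ _)
      have hM0 : ∀ i j, 0 ≤ M i j := by
        intro i j
        rw [hM', Matrix.add_apply, Matrix.one_apply]
        have := hF i j
        split_ifs <;> linarith
      have hMdb : ∀ i j, M i j * q j = M j i * q i := by
        intro i j
        have h := congrFun (congrFun hRR i) j
        rw [Matrix.mul_diagonal, Matrix.diagonal_mul, Matrix.transpose_apply] at h
        rw [hM', Matrix.add_apply, Matrix.add_apply, Matrix.one_apply, Matrix.one_apply]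
        by_cases hij : i = j
        · subst hij; rfl
        · rw [if_neg hij, if_neg (Ne.symm hij)]; linarith
      set e : τ → ℝ := fun j => ∑ i, M i j with he
      have he1 : ∀ j, 1 ≤ e j := by
        intro j
        have h1 : M j j ≤ e j := Finset.single_le_sum (fun i _ => hM0 i j) (Finset.mem_univ j)
        have h3 : 1 ≤ M j j := by
          rw [hM', Matrix.add_apply, Matrix.one_apply_eq]; linarith [hF j j]
        linarith
      have hxe : ∀ j, x j = e j * y j := by
        have hdet : IsUnit (diagonal e).det := by
          rw [Matrix.det_diagonal, isUnit_iff_ne_zero, Finset.prod_ne_zero_iff]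
          intro j _; linarith [he1 j]
        intro j
        have : (diagonal e) *ᵥ y = x := by
          rw [hy, hV, Matrix.mulVec_mulVec, Matrix.mul_nonsing_inv _ hdet, Matrix.one_mulVec]
        rw [← this, Matrix.mulVec_diagonal]
      have hen := rc_energy (fun i j => M i j * q j) hMdb
        (fun i j _ => mul_nonneg (hM0 i j) (hq j).le) (fun i => y i / q i)
      have l1 : ∑ j, y j * (M *ᵥ y) j / q j =
          ∑ i, ∑ j, M i j * q j * (y i / q i) * (y j / q j) := by
        refine Finset.sum_congr rfl fun i _ => ?_
        simp only [mulVec, dotProduct, Finset.mul_sum, Finset.sum_div]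
        refine Finset.sum_congr rfl fun j _ => ?_
        have := (hq i).ne'
        have := (hq j).ne'
        field_simp
      rw [l1]
      refine hen.trans (Finset.sum_le_sum fun j _ => ?_)
      rw [← Finset.sum_mul]
      have l2 : (∑ i, M i j) * q j * (y j / q j) ^ 2 = e j * y j ^ 2 / q j := by
        have := (hq j).ne'
        simp only [he]
        field_simp
      rw [l2, hxe]
      refine div_le_div_of_nonneg_right ?_ (hq j).le
      have := he1 j
      nlinarith [sq_nonneg (y j), mul_nonneg (mul_nonneg (by linarith : (0:ℝ) ≤ e j)
        (by linarith : (0:ℝ) ≤ e j - 1)) (sq_nonneg (y j))]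
    · by_cases hdet : IsUnit M.det
      · have hxM : x = M *ᵥ y := by
          rw [hy, hV, Matrix.mulVec_mulVec, Matrix.mul_nonsing_inv _ hdet, Matrix.one_mulVec]
        rw [hxM]
        have h3 : ∑ j, (M *ᵥ y) j ^ 2 / q j = ∑ j, y j * (M *ᵥ y) j / q j +
            ∑ j, y j * ((C * A⁻¹) *ᵥ w) j / q j + ∑ j, ((C * A⁻¹) *ᵥ w) j ^ 2 / q j := by
          rw [← Finset.sum_add_distrib, ← Finset.sum_add_distrib]
          exact Finset.sum_congr rfl fun j _ => by rw [hMy]; ring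
        have h4 : 0 ≤ ∑ j, ((C * A⁻¹) *ᵥ w) j ^ 2 / q j :=
          Finset.sum_nonneg fun i _ => div_nonneg (sq_nonneg _) (hq i).le
        linarith
      · have hy0 : y = 0 := by
          rw [hy, hV, Matrix.nonsing_inv_apply_not_isUnit _ hdet, Matrix.zero_mulVec]
        rw [hy0]
        simp only [Pi.zero_apply, zero_mul, zero_div, Finset.sum_const_zero]
        exact Finset.sum_nonneg fun i _ => div_nonneg (sq_nonneg _) (hq i).le
  -- step 3
  have hD : (G - C * A⁻¹ * B) *ᵥ ut = lam • x := by
    have f1 : (C * A⁻¹) *ᵥ (A *ᵥ us + B *ᵥ ut) = (C * A⁻¹) *ᵥ (lam • us) := by rw [e1]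
    rw [Matrix.mulVec_add, Matrix.mulVec_mulVec, Matrix.mulVec_mulVec, Matrix.mul_assoc C,
      Matrix.nonsing_inv_mul _ hinv, Matrix.mul_one, Matrix.mulVec_smul] at f1
    rw [hx, Matrix.sub_mulVec, smul_sub, ← e2, ← f1]
    abel
  have hDdb : ∀ i j, (G - C * A⁻¹ * B) i j * q j = q i * (G - C * A⁻¹ * B) j i := by
    have h : (G - C * A⁻¹ * B) * diagonal q = diagonal q * (G - C * A⁻¹ * B)ᵀ := by
      rw [Matrix.sub_mul, hG, rc_adj_mul hR hB, Matrix.transpose_sub, Matrix.mul_sub,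
        Matrix.mul_assoc C]
    intro i j
    have := congrFun (congrFun h i) j
    rwa [Matrix.mul_diagonal, Matrix.diagonal_mul, Matrix.transpose_apply] at this
  have h3 := rc_spec _ q hq hDdb ut
  rw [hD] at h3
  set r := sSup {r : ℝ | ∃ μ ∈ spectrum ℝ (G - C * A⁻¹ * B), r = |μ|}
  have h4 : ∑ i, (lam • x) i ^ 2 / q i = lam ^ 2 * ∑ i, x i ^ 2 / q i := by
    rw [Finset.mul_sum]
    exact Finset.sum_congr rfl fun i _ => by rw [Pi.smul_apply, smul_eq_mul]; ring
  have h5 : ∑ j, ut j ^ 2 / q j ≤ 1 := by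
    have : 0 ≤ ∑ i, us i ^ 2 / p i :=
      Finset.sum_nonneg fun i _ => div_nonneg (sq_nonneg _) (hp i).le
    linarith
  rw [hN, div_pow, sq_abs, le_div_iff₀ (by nlinarith)]
  nlinarith [mul_le_mul_of_nonneg_left h5 (sq_nonneg r), mul_le_mul_of_nonneg_left h2 (sq_nonneg lam)]

end

/-- For an eigenpair `(λ, u)` of `K` with `‖u‖_π = 1` and `λ < 0`, and the
Schur complement `D = K_TT − K_TS K_SS⁻¹ K_ST`, the matrix `V` of either Type A or B
satisfies `‖Vu‖_π ≤ ρ(D)/|λ|` where `ρ(D)` is the spectral radius of `D`. -/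
theorem rcmc_stmt15 (n : ℕ) (K : Matrix (Fin n) (Fin n) ℝ) (π : Fin n → ℝ)
    (hoff : ∀ i j, i ≠ j → 0 ≤ K i j)
    (hcol : ∀ j, ∑ i, K i j = 0)
    (hπpos : ∀ i, 0 < π i) (hπsum : ∑ i, π i = 1)
    (hdb : K * Matrix.diagonal π = Matrix.diagonal π * Kᵀ)
    (S : Finset (Fin n))
    (hinv : IsUnit (K.submatrix ((↑) : ↥S → Fin n) ((↑) : ↥S → Fin n)).det)
    (M VTT : Matrix ↥(Sᶜ) ↥(Sᶜ) ℝ)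
    (hM : M = 1 + K.submatrix ((↑) : ↥(Sᶜ) → Fin n) ((↑) : ↥S → Fin n)
      * (K.submatrix ((↑) : ↥S → Fin n) ((↑) : ↥S → Fin n))⁻¹
      * (K.submatrix ((↑) : ↥S → Fin n) ((↑) : ↥S → Fin n))⁻¹
      * K.submatrix ((↑) : ↥S → Fin n) ((↑) : ↥(Sᶜ) → Fin n))
    (hVTT : VTT = (Matrix.diagonal (fun j : ↥(Sᶜ) => ∑ i : ↥(Sᶜ), M i j))⁻¹ ∨ VTT = M⁻¹)
    (lam : ℝ) (u : Fin n → ℝ)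
    (heig : K.mulVec u = lam • u) (hlam : lam < 0) (hu : pinorm π u = 1) :
    let KSS := K.submatrix ((↑) : ↥S → Fin n) ((↑) : ↥S → Fin n)
    let KST := K.submatrix ((↑) : ↥S → Fin n) ((↑) : ↥(Sᶜ) → Fin n)
    let KTS := K.submatrix ((↑) : ↥(Sᶜ) → Fin n) ((↑) : ↥S → Fin n)
    let KTT := K.submatrix ((↑) : ↥(Sᶜ) → Fin n) ((↑) : ↥(Sᶜ) → Fin n)
    let D := KTT - KTS * KSS⁻¹ * KST
    let ρD := sSup {r : ℝ | ∃ μ ∈ spectrum ℝ D, r = |μ|}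
    let V := rcmcAssemble S (KSS⁻¹ * KST * VTT * KTS * KSS⁻¹)
      (-(KSS⁻¹ * KST * VTT)) (-(VTT * KTS * KSS⁻¹)) VTT
    pinorm π (V.mulVec u) ≤ ρD / |lam| := by
  intro KSS KST KTS KTT D ρD V
  have hK : ∀ i j, K i j * π j = π i * K j i := fun i j => by
    have := congrFun (congrFun hdb i) j
    rwa [Matrix.mul_diagonal, Matrix.diagonal_mul, Matrix.transpose_apply] at this
  have split : ∀ f : Fin n → ℝ, ∑ i, f i = ∑ i : ↥S, f i + ∑ i : ↥(Sᶜ), f i := fun f => by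
    rw [Finset.sum_coe_sort S f, Finset.sum_coe_sort Sᶜ f, Finset.sum_add_sum_compl]
  have hST : ∀ (i : ↥S) (j : ↥(Sᶜ)), (i : Fin n) ≠ j := fun i j h =>
    Finset.mem_compl.1 j.2 (h ▸ i.2)
  have hρ : 0 ≤ ρD := Real.sSup_nonneg (by rintro _ ⟨μ, _, rfl⟩; exact abs_nonneg _)
  let us : ↥S → ℝ := fun i => u i
  let ut : ↥(Sᶜ) → ℝ := fun i => u i
  let x : ↥(Sᶜ) → ℝ := ut - (KTS * KSS⁻¹) *ᵥ us
  let y : ↥(Sᶜ) → ℝ := VTT *ᵥ x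
  have hVS : ∀ i : ↥S, (V *ᵥ u) i = - ((KSS⁻¹ * KST) *ᵥ y) i := by
    intro i
    have h1 : (V *ᵥ u) i = ((KSS⁻¹ * KST * VTT * KTS * KSS⁻¹) *ᵥ us
        + (-(KSS⁻¹ * KST * VTT)) *ᵥ ut) i := by
      rw [Pi.add_apply]
      simp only [mulVec, dotProduct]
      rw [split]
      congr 1
      · refine Finset.sum_congr rfl fun j _ => ?_
        simp [V, rcmcAssemble, us]
      · refine Finset.sum_congr rfl fun j _ => ?_
        have := Finset.mem_compl.1 j.2
        simp [V, rcmcAssemble, ut, this]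
    rw [h1]
    simp only [y, x, Matrix.mulVec_sub, Matrix.mulVec_mulVec, Matrix.neg_mulVec, Matrix.mul_assoc,
      Pi.add_apply, Pi.sub_apply, Pi.neg_apply]
    ring
  have hVT : ∀ i : ↥(Sᶜ), (V *ᵥ u) i = y i := by
    intro i
    have hi := Finset.mem_compl.1 i.2
    have h1 : (V *ᵥ u) i = ((-(VTT * KTS * KSS⁻¹)) *ᵥ us + VTT *ᵥ ut) i := by
      rw [Pi.add_apply]
      simp only [mulVec, dotProduct]
      rw [split]
      congr 1
      · refine Finset.sum_congr rfl fun j _ => ?_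
        simp [V, rcmcAssemble, us, hi]
      · refine Finset.sum_congr rfl fun j _ => ?_
        have := Finset.mem_compl.1 j.2
        simp [V, rcmcAssemble, ut, this, hi]
    rw [h1]
    simp only [y, x, Matrix.mulVec_sub, Matrix.mulVec_mulVec, Matrix.neg_mulVec, Matrix.mul_assoc,
      Pi.add_apply, Pi.sub_apply, Pi.neg_apply]
    ring
  have hcolS : ∀ j : ↥S, ∑ i, KSS i j ≤ 0 := by
    intro j
    have h := hcol j
    rw [split] at h
    have h0 : 0 ≤ ∑ i : ↥(Sᶜ), K i j :=
      Finset.sum_nonneg fun i _ => hoff _ _ (hST j i).symm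
    have h1 : ∑ i, KSS i j = ∑ i : ↥S, K i j := rfl
    linarith
  have hun : ∑ i, us i ^ 2 / π i + ∑ j, ut j ^ 2 / π j = 1 := by
    have h : ∑ i, u i ^ 2 / π i = 1 := by
      have := hu
      rwa [pinorm, Real.sqrt_eq_one] at this
    rw [split] at h
    exact h
  have core := rc_core KSS KST KTS KTT (fun i => π i) (fun i => π i) (fun i => hπpos i)
    (fun i => hπpos i)
    (by ext i j; rw [Matrix.mul_diagonal, Matrix.diagonal_mul]; exact hK i j)
    (by ext i j; rw [Matrix.mul_diagonal, Matrix.diagonal_mul]; exact hK i j)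
    (by ext i j; rw [Matrix.mul_diagonal, Matrix.diagonal_mul]; exact hK i j)
    (by ext i j; rw [Matrix.mul_diagonal, Matrix.diagonal_mul]; exact hK i j)
    (fun i j h => hoff _ _ (fun h' => h (Subtype.ext h')))
    (fun i j => hoff _ _ (hST i j)) (fun i j => hoff _ _ (hST j i).symm)
    hcolS hinv M VTT hM hVTT lam hlam us ut
    (by
      ext i
      have h := congrFun heig i
      simp only [mulVec, dotProduct] at h
      rw [split] at h
      exact h)
    (by
      ext i
      have h := congrFun heig i
      simp only [mulVec, dotProduct] at h
      rw [split] at h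
      exact h)
    hun x y rfl rfl
  rw [pinorm]
  refine Real.sqrt_le_iff.2 ⟨div_nonneg hρ (abs_nonneg _), ?_⟩
  rw [split]
  simp only [hVS, hVT, neg_sq]
  exact core
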